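/- Under the threshold model, if Z_j is independent of the family {Z_k : k ∈ A} for a subset A ⊆ {1,…,d} not containing j, then E[U_j⁴ U_A⁴] ≤ |A|^{-1} Σ_{k∈A} E[θ_j^{-1}(1−θ_j)^{-1} θ_k^{-1}(1−θ_k)^{-1}]. -/

import Mathlib

open MeasureTheory ProbabilityTheory
open scoped ENNReal NNReal

/-- The observed binary variable `X_j = 1{Z_j ≤ F_j⁻¹(θ_j)}` of the threshold model. -/
noncomputable def Xbin {Ω : Type*} {d : ℕ} (Z θ : Ω → Fin d → ℝ)
    (Finv : Fin d → ℝ → ℝ) (ω : Ω) (j : Fin d) : ℝ :=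
  if Z ω j ≤ Finv j (θ ω j) then 1 else 0

/-- The standardized variable `U_j = (X_j − θ_j)/√(θ_j(1−θ_j))`. -/
noncomputable def Ustd {Ω : Type*} {d : ℕ} (Z θ : Ω → Fin d → ℝ)
    (Finv : Fin d → ℝ → ℝ) (ω : Ω) (j : Fin d) : ℝ :=
  (Xbin Z θ Finv ω j - θ ω j) / Real.sqrt (θ ω j * (1 - θ ω j))

/-- The set average `U_A = |A|⁻¹ ∑_{k ∈ A} U_k`. -/
noncomputable def Uavg {Ω : Type*} {d : ℕ} (Z θ : Ω → Fin d → ℝ)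
    (Finv : Fin d → ℝ → ℝ) (A : Finset (Fin d)) (ω : Ω) : ℝ :=
  (A.card : ℝ)⁻¹ * ∑ k ∈ A, Ustd Z θ Finv ω k

noncomputable def gaux (f : ℝ → ℝ) (z t : ℝ) : ℝ :=
  (((if z ≤ f t then 1 else 0) - t) / Real.sqrt (t * (1 - t))) ^ 4

lemma gaux_nonneg (f : ℝ → ℝ) (z t : ℝ) : 0 ≤ gaux f z t := by
  unfold gaux; positivity

lemma gaux_meas (f : ℝ → ℝ) (hf : Measurable f) :
    Measurable (fun p : ℝ × ℝ => gaux f p.1 p.2) := by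
  unfold gaux
  have : Measurable (fun p : ℝ × ℝ => if p.1 ≤ f p.2 then (1 : ℝ) else 0) :=
    Measurable.ite (measurableSet_le measurable_fst (hf.comp measurable_snd))
      measurable_const measurable_const
  fun_prop

lemma gaux_bound {Ω : Type*} [MeasurableSpace Ω] (μ : Measure Ω) [IsProbabilityMeasure μ]
    (f : ℝ → ℝ) (Y : Ω → ℝ) (hY : Measurable Y) (t : ℝ) (ht : t ∈ Set.Ioo (0 : ℝ) 1)
    (hq : μ {ω | Y ω ≤ f t} = ENNReal.ofReal t) :
    ∫⁻ ω, ENNReal.ofReal (gaux f (Y ω) t) ∂μ ≤ ENNReal.ofReal (t⁻¹ * (1 - t)⁻¹) := by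
  obtain ⟨h0, h1⟩ := ht
  have h1' : 0 < 1 - t := by linarith
  have hS : MeasurableSet {ω | Y ω ≤ f t} := measurableSet_le hY measurable_const
  have hc : μ {ω | Y ω ≤ f t}ᶜ = ENNReal.ofReal (1 - t) := by
    rw [prob_compl_eq_one_sub hS, hq, ENNReal.ofReal_sub _ h0.le, ENNReal.ofReal_one]
  have hsq : Real.sqrt (t * (1 - t)) ^ 4 = (t * (1 - t)) ^ 2 := by
    rw [show (4 : ℕ) = 2 * 2 from rfl, pow_mul, Real.sq_sqrt (by positivity)]
  rw [← lintegral_add_compl _ hS]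
  have e1 : ∫⁻ ω in {ω | Y ω ≤ f t}, ENNReal.ofReal (gaux f (Y ω) t) ∂μ
      = ENNReal.ofReal ((1 - t) ^ 4 / (t * (1 - t)) ^ 2 * t) := by
    rw [setLIntegral_congr_fun (g := fun _ => ENNReal.ofReal ((1 - t) ^ 4 / (t * (1 - t)) ^ 2)) hS,
      setLIntegral_const, hq, ← ENNReal.ofReal_mul (by positivity)]
    intro ω hω
    have : Y ω ≤ f t := hω
    simp only [gaux, if_pos this, div_pow, hsq]
  have e2 : ∫⁻ ω in {ω | Y ω ≤ f t}ᶜ, ENNReal.ofReal (gaux f (Y ω) t) ∂μ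
      = ENNReal.ofReal (t ^ 4 / (t * (1 - t)) ^ 2 * (1 - t)) := by
    rw [setLIntegral_congr_fun (g := fun _ => ENNReal.ofReal (t ^ 4 / (t * (1 - t)) ^ 2)) hS.compl,
      setLIntegral_const, hc, ← ENNReal.ofReal_mul (by positivity)]
    intro ω hω
    have : ¬ Y ω ≤ f t := hω
    simp only [gaux, if_neg this, div_pow, hsq]
    congr 2; ring
  rw [e1, e2, ← ENNReal.ofReal_add (by positivity) (by positivity)]
  apply ENNReal.ofReal_le_ofReal
  have : (1 - t) ^ 4 / (t * (1 - t)) ^ 2 * t + t ^ 4 / (t * (1 - t)) ^ 2 * (1 - t)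
    = (t⁻¹ * (1 - t)⁻¹) * ((1 - t) ^ 3 + t ^ 3) := by
    field_simp
  rw [this]
  apply mul_le_of_le_one_right (by positivity)
  nlinarith [mul_pos h0 h1']

lemma key_aux {Ω : Type*} [MeasurableSpace Ω] (μ : Measure Ω) [IsProbabilityMeasure μ]
    (d : ℕ) (Z θ : Ω → Fin d → ℝ) (Finv : Fin d → ℝ → ℝ)
    (hZmeas : Measurable Z) (hθmeas : Measurable θ) (hFmeas : ∀ j, Measurable (Finv j))
    (hθ01 : ∀ ω j, θ ω j ∈ Set.Ioo (0 : ℝ) 1)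
    (hindep : IndepFun Z θ μ)
    (hquant : ∀ j, ∀ t ∈ Set.Ioo (0 : ℝ) 1,
      μ {ω | Z ω j ≤ Finv j t} = ENNReal.ofReal t)
    (j : Fin d) (A : Finset (Fin d)) (hA : A.Nonempty) (hjA : j ∉ A)
    (hZjA : IndepFun (fun ω => Z ω j) (fun ω (k : A) => Z ω (k : Fin d)) μ) :
    ∀ k ∈ A, ∫⁻ ω, ENNReal.ofReal (gaux (Finv j) (Z ω j) (θ ω j)) *
        ENNReal.ofReal (gaux (Finv k) (Z ω k) (θ ω k)) ∂μ
      ≤ ∫⁻ ω, ENNReal.ofReal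
            ((θ ω j)⁻¹ * (1 - θ ω j)⁻¹ * ((θ ω k)⁻¹ * (1 - θ ω k)⁻¹)) ∂μ := by
  have hg : ∀ k, Measurable (fun p : (Fin d → ℝ) × (Fin d → ℝ) =>
      ENNReal.ofReal (gaux (Finv k) (p.1 k) (p.2 k))) := fun k =>
    ((gaux_meas (Finv k) (hFmeas k)).comp
      (f := fun p : (Fin d → ℝ) × (Fin d → ℝ) => (p.1 k, p.2 k)) (by fun_prop)).ennreal_ofReal
  have m0 : ∀ i t, Measurable (fun z => ENNReal.ofReal (gaux (Finv i) z t)) := fun i t =>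
    ((gaux_meas (Finv i) (hFmeas i)).comp
      (f := fun z : ℝ => (z, t)) (by fun_prop)).ennreal_ofReal
  intro k hk
  have hG := (hg j).mul (hg k)
  have hmap := (indepFun_iff_map_prod_eq_prod_map_map hZmeas.aemeasurable
    hθmeas.aemeasurable).1 hindep
  have e : ∫⁻ ω, ENNReal.ofReal (gaux (Finv j) (Z ω j) (θ ω j)) *
      ENNReal.ofReal (gaux (Finv k) (Z ω k) (θ ω k)) ∂μ
      = ∫⁻ ω', ∫⁻ ω, ENNReal.ofReal (gaux (Finv j) (Z ω j) (θ ω' j)) *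
      ENNReal.ofReal (gaux (Finv k) (Z ω k) (θ ω' k)) ∂μ ∂μ := by
    have hL := lintegral_map (μ := μ) hG (hZmeas.prodMk hθmeas)
    have := Measure.isProbabilityMeasure_map (μ := μ) hZmeas.aemeasurable
    have := Measure.isProbabilityMeasure_map (μ := μ) hθmeas.aemeasurable
    rw [hmap, lintegral_prod_symm' _ hG, lintegral_map hG.lintegral_prod_left' hθmeas] at hL
    simp only [Pi.mul_apply] at hL
    rw [← hL]
    apply lintegral_congr
    intro ω'
    have hs : Measurable (fun z : Fin d → ℝ => ENNReal.ofReal (gaux (Finv j) (z j) (θ ω' j)) *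
        ENNReal.ofReal (gaux (Finv k) (z k) (θ ω' k))) :=
      ((m0 j (θ ω' j)).comp (measurable_pi_apply j)).mul
        ((m0 k (θ ω' k)).comp (measurable_pi_apply k))
    rw [lintegral_map hs hZmeas]
  rw [e]
  apply lintegral_mono
  intro ω'
  have m : ∀ i, Measurable (fun z => ENNReal.ofReal (gaux (Finv i) z (θ ω' i))) := fun i =>
    m0 i (θ ω' i)
  have mz : ∀ i, Measurable (fun ω => Z ω i) := fun i => (measurable_pi_apply i).comp hZmeas
  have hi : IndepFun (fun ω => ENNReal.ofReal (gaux (Finv j) (Z ω j) (θ ω' j)))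
      (fun ω => ENNReal.ofReal (gaux (Finv k) (Z ω k) (θ ω' k))) μ :=
    hZjA.comp (m j) ((m k).comp (measurable_pi_apply (⟨k, hk⟩ : A)))
  have := lintegral_mul_eq_lintegral_mul_lintegral_of_indepFun
    ((m j).comp (mz j)) ((m k).comp (mz k)) hi
  have pj := hθ01 ω' j
  have p1 : 0 ≤ 1 - θ ω' j := by linarith [pj.2]
  have p0 := pj.1.le
  refine (le_of_eq this).trans ?_
  simp only []
  rw [ENNReal.ofReal_mul (p := (θ ω' j)⁻¹ * (1 - θ ω' j)⁻¹) (by positivity)]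
  exact mul_le_mul' (gaux_bound μ _ _ (mz j) _ pj (hquant j _ pj))
    (gaux_bound μ _ _ (mz k) _ (hθ01 ω' k) (hquant k _ (hθ01 ω' k)))

lemma point_aux {Ω : Type*} [MeasurableSpace Ω] (μ : Measure Ω) [IsProbabilityMeasure μ]
    (d : ℕ) (Z θ : Ω → Fin d → ℝ) (Finv : Fin d → ℝ → ℝ)
    (hZmeas : Measurable Z) (hθmeas : Measurable θ) (hFmeas : ∀ j, Measurable (Finv j))
    (hθ01 : ∀ ω j, θ ω j ∈ Set.Ioo (0 : ℝ) 1)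
    (hindep : IndepFun Z θ μ)
    (hquant : ∀ j, ∀ t ∈ Set.Ioo (0 : ℝ) 1,
      μ {ω | Z ω j ≤ Finv j t} = ENNReal.ofReal t)
    (j : Fin d) (A : Finset (Fin d)) (hA : A.Nonempty) (hjA : j ∉ A)
    (hZjA : IndepFun (fun ω => Z ω j) (fun ω (k : A) => Z ω (k : Fin d)) μ) :
    ∀ ω, ENNReal.ofReal ((Ustd Z θ Finv ω j) ^ 4 * (Uavg Z θ Finv A ω) ^ 4)
      ≤ (A.card : ℝ≥0∞)⁻¹ * ∑ k ∈ A, ENNReal.ofReal (gaux (Finv j) (Z ω j) (θ ω j)) *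
        ENNReal.ofReal (gaux (Finv k) (Z ω k) (θ ω k)) := by
  have hU : ∀ ω k, (Ustd Z θ Finv ω k) ^ 4 = gaux (Finv k) (Z ω k) (θ ω k) := fun ω k => rfl
  have hcard : 0 < (A.card : ℝ) := by exact_mod_cast hA.card_pos
  intro ω
  have hj : (Uavg Z θ Finv A ω) ^ 4
      ≤ (A.card : ℝ)⁻¹ * ∑ k ∈ A, gaux (Finv k) (Z ω k) (θ ω k) := by
    have := Real.pow_arith_mean_le_arith_mean_pow_of_even A (fun _ => (A.card : ℝ)⁻¹)
      (fun k => Ustd Z θ Finv ω k) (fun _ _ => by positivity)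
      (by simp [hcard.ne']) (n := 4) (by decide)
    simpa only [Uavg, ← Finset.mul_sum, hU] using this
  have hjA' := mul_le_mul_of_nonneg_left hj (gaux_nonneg (Finv j) (Z ω j) (θ ω j))
  rw [hU]
  refine (ENNReal.ofReal_le_ofReal hjA').trans (le_of_eq ?_)
  rw [ENNReal.ofReal_mul (gaux_nonneg _ _ _), ENNReal.ofReal_mul (by positivity),
    ENNReal.ofReal_sum_of_nonneg (fun _ _ => gaux_nonneg _ _ _),
    ENNReal.ofReal_inv_of_pos hcard, ENNReal.ofReal_natCast, ← Finset.mul_sum]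
  ring

/-- Under the threshold model, if `Z_j` is independent of `{Z_k : k ∈ A}` (with `j ∉ A`),
then `E[U_j⁴ U_A⁴] ≤ |A|⁻¹ ∑_{k∈A} E[θ_j⁻¹(1−θ_j)⁻¹ θ_k⁻¹(1−θ_k)⁻¹]`. -/
theorem stmt5 {Ω : Type*} [MeasurableSpace Ω] (μ : Measure Ω) [IsProbabilityMeasure μ]
    (d : ℕ) (Z θ : Ω → Fin d → ℝ) (Finv : Fin d → ℝ → ℝ)
    (hZmeas : Measurable Z) (hθmeas : Measurable θ) (hFmeas : ∀ j, Measurable (Finv j))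
    (hθ01 : ∀ ω j, θ ω j ∈ Set.Ioo (0 : ℝ) 1)
    (hindep : IndepFun Z θ μ)
    (hquant : ∀ j, ∀ t ∈ Set.Ioo (0 : ℝ) 1,
      μ {ω | Z ω j ≤ Finv j t} = ENNReal.ofReal t)
    (j : Fin d) (A : Finset (Fin d)) (hA : A.Nonempty) (hjA : j ∉ A)
    (hZjA : IndepFun (fun ω => Z ω j) (fun ω (k : A) => Z ω (k : Fin d)) μ) :
    ∫⁻ ω, ENNReal.ofReal ((Ustd Z θ Finv ω j) ^ 4 * (Uavg Z θ Finv A ω) ^ 4) ∂μ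
      ≤ (A.card : ℝ≥0∞)⁻¹ * ∑ k ∈ A, ∫⁻ ω,
          ENNReal.ofReal
            ((θ ω j)⁻¹ * (1 - θ ω j)⁻¹ * ((θ ω k)⁻¹ * (1 - θ ω k)⁻¹)) ∂μ := by
  have mu : ∀ k, Measurable (fun ω => ENNReal.ofReal (gaux (Finv k) (Z ω k) (θ ω k))) := fun k =>
    ((gaux_meas (Finv k) (hFmeas k)).comp
      (f := fun ω => (Z ω k, θ ω k)) (by fun_prop)).ennreal_ofReal
  have key := key_aux μ d Z θ Finv hZmeas hθmeas hFmeas hθ01 hindep hquant j A hA hjA hZjA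
  have point := point_aux μ d Z θ Finv hZmeas hθmeas hFmeas hθ01 hindep hquant j A hA hjA hZjA
  refine (lintegral_mono point).trans ?_
  have hm : ∀ k, Measurable (fun ω => ENNReal.ofReal (gaux (Finv j) (Z ω j) (θ ω j)) *
        ENNReal.ofReal (gaux (Finv k) (Z ω k) (θ ω k))) := fun k =>
    (mu j).mul (mu k)
  rw [lintegral_const_mul _ (Finset.measurable_fun_sum _ fun k _ => hm k),
    lintegral_finsetSum _ (fun k _ => hm k)]
  have hs := Finset.sum_le_sum key
  exact mul_le_mul' le_rfl hs
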